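/- Let N ≥ 1, let Ω ⊂ ℝ^N be open, δ₀ > 0, and let v : Ω → ℝ be positive and twice continuously differentiable on S = {x ∈ Ω : 0 < v(x) < δ₀}, with |∇v(x)| = 1 and |Δv(x)| ≤ M on S for some M ≥ 0. Let q > 1, β ≥ 0 with q < β + 2, and set γ = (β − q + 2)/(q − 1). Assume h : [0,∞) → [0,∞) satisfies h(s) ≤ l₂·s^q for all s ≥ 0 with l₂ > 0; that 0 < b(x) ≤ b₂·v(x)^β on S with b₂ > 0; that 0 ≤ a(x) ≤ a₂·v(x)^α on S with a₂ > 0 and α > −2; and that f(x) ≥ 0 on S. Then for every constant C with 0 < C < (γ(γ+1)/(b₂·l₂·γ^q))^{1/(q−1)} there exists δ ∈ (0, δ₀] such that the function W(x) = C·v(x)^{−γ} satisfies −ΔW(x) + b(x)·h(|∇W(x)|) + a(x)·W(x) − f(x) ≤ 0 for every x ∈ Ω with 0 < v(x) < δ. -/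

import Mathlib

open Set

/-- The Laplacian of `f : ℝ^N → ℝ`, as the sum of the pure second derivatives in the
coordinate directions. -/
noncomputable def laplacian {N : ℕ} (f : EuclideanSpace ℝ (Fin N) → ℝ)
    (x : EuclideanSpace ℝ (Fin N)) : ℝ :=
  ∑ i : Fin N, fderiv ℝ (fun y => fderiv ℝ f y (EuclideanSpace.single i 1)) x
    (EuclideanSpace.single i 1)

open Filter Topology

section ChainRule

variable {N : ℕ} {v : EuclideanSpace ℝ (Fin N) → ℝ} {x : EuclideanSpace ℝ (Fin N)}
  {φ φ' : ℝ → ℝ} {c : ℝ}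

theorem norm_gradient_sq_eq_sum_fderiv :
    ‖gradient v x‖ ^ 2 = ∑ i, fderiv ℝ v x (EuclideanSpace.single i 1) ^ 2 := by
  rw [EuclideanSpace.norm_sq_eq]
  refine Finset.sum_congr rfl fun i _ => ?_
  have hcoord : gradient v x i = fderiv ℝ v x (EuclideanSpace.single i 1) := by
    have := InnerProductSpace.toDual_symm_apply (𝕜 := ℝ) (x := EuclideanSpace.single i (1 : ℝ))
      (y := fderiv ℝ v x)
    rw [← this, EuclideanSpace.inner_single_right]
    simp [gradient]
  rw [hcoord, Real.norm_eq_abs, sq_abs]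

theorem differentiableAt_of_gradient_ne_zero (hx : gradient v x ≠ 0) :
    DifferentiableAt ℝ v x := by
  by_contra hd
  exact hx (gradient_eq_zero_of_not_differentiableAt hd)

theorem norm_gradient_comp (hv : DifferentiableAt ℝ v x) (hφ : HasDerivAt φ c (v x)) :
    ‖gradient (fun y => φ (v y)) x‖ = |c| * ‖gradient v x‖ := by
  have hfderiv : fderiv ℝ (fun y => φ (v y)) x = c • fderiv ℝ v x :=
    (hφ.comp_hasFDerivAt x hv.hasFDerivAt).fderiv
  simp [gradient, hfderiv, norm_smul]

/-- Chain rule for the Laplacian: `Δ(φ ∘ v) = φ'(v) Δv + φ''(v) |∇v|²`. -/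
theorem laplacian_comp (hv : ContDiffAt ℝ 2 v x)
    (hφ : ∀ᶠ t in 𝓝 (v x), HasDerivAt φ (φ' t) t) (hφ' : HasDerivAt φ' c (v x)) :
    laplacian (fun y => φ (v y)) x = φ' (v x) * laplacian v x + c * ‖gradient v x‖ ^ 2 := by
  have hdiff : ∀ᶠ y in 𝓝 x, DifferentiableAt ℝ v y :=
    (hv.eventually (by simp)).mono fun y hy => hy.differentiableAt (by simp)
  have hfderiv : ∀ᶠ y in 𝓝 x,
      fderiv ℝ (fun z => φ (v z)) y = φ' (v y) • fderiv ℝ v y := by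
    filter_upwards [hdiff, hv.continuousAt.eventually hφ] with y hy hφy
    exact (hφy.comp_hasFDerivAt y hy.hasFDerivAt).fderiv
  have hd2 : DifferentiableAt ℝ (fderiv ℝ v) x :=
    (hv.fderiv_right (m := 1) (by norm_num)).differentiableAt (by simp)
  have hφ'v : HasFDerivAt (fun y => φ' (v y)) (c • fderiv ℝ v x) x :=
    hφ'.comp_hasFDerivAt x hdiff.self_of_nhds.hasFDerivAt
  rw [norm_gradient_sq_eq_sum_fderiv, laplacian, laplacian, Finset.mul_sum, Finset.mul_sum,
    ← Finset.sum_add_distrib]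
  refine Finset.sum_congr rfl fun i _ => ?_
  have heq : (fun y => fderiv ℝ (fun z => φ (v z)) y (EuclideanSpace.single i 1)) =ᶠ[𝓝 x]
      fun y => φ' (v y) * fderiv ℝ v y (EuclideanSpace.single i 1) := by
    filter_upwards [hfderiv] with y hy
    simp [hy]
  have hdi : DifferentiableAt ℝ (fun y => fderiv ℝ v y (EuclideanSpace.single i 1)) x :=
    hd2.clm_apply (differentiableAt_const _)
  rw [heq.fderiv_eq, fderiv_fun_mul hφ'v.differentiableAt hdi, hφ'v.fderiv]
  simp
  ring

end ChainRule

theorem hasDerivAt_const_mul_rpow (C p : ℝ) {t : ℝ} (ht : 0 < t) :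
    HasDerivAt (fun s : ℝ => C * s ^ p) (C * p * t ^ (p - 1)) t := by
  simpa [mul_assoc] using (Real.hasDerivAt_rpow_const (p := p) (Or.inl ht.ne')).const_mul C

theorem mul_rpow_lt_of_lt_rpow_inv {A B C q : ℝ} (hA : 0 < A) (hB : 0 < B) (hC : 0 < C)
    (hq : 1 < q) (h : C < (A / B) ^ (1 / (q - 1))) : B * C ^ (q - 1) < A := by
  have hq' : 0 < q - 1 := sub_pos.mpr hq
  have hpow := Real.rpow_lt_rpow hC.le h hq'
  rw [← Real.rpow_mul (div_pos hA hB).le, one_div_mul_cancel hq'.ne', Real.rpow_one,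
    lt_div_iff₀ hB] at hpow
  linarith

theorem exists_pos_forall_add_rpow_le {A B p K : ℝ} (hp : 0 < p) (hK : 0 < K) :
    ∃ δ > 0, ∀ t, 0 < t → t < δ → A * t + B * t ^ p ≤ K := by
  have hcont : ContinuousAt (fun t : ℝ => A * t + B * t ^ p) 0 :=
    (continuousAt_const.mul continuousAt_id).add
      (continuousAt_const.mul (Real.continuousAt_rpow_const 0 p (Or.inr hp.le)))
  have hlt : ∀ᶠ t in 𝓝 (0 : ℝ), A * t + B * t ^ p < K :=
    hcont.eventually (gt_mem_nhds (by simpa [Real.zero_rpow hp.ne'] using hK))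
  obtain ⟨δ, hδ, hball⟩ := Metric.eventually_nhds_iff.mp hlt
  refine ⟨δ, hδ, fun t ht htδ => (hball ?_).le⟩
  simpa [abs_of_pos ht] using htδ

/-- subsolution barrier in the gradient-dominant regime `q < β + 2`.
With `γ = (β − q + 2)/(q − 1)`, `h(s) ≤ l₂·s^q`, `0 < b ≤ b₂·v^β`,
`0 ≤ a ≤ a₂·v^α` with `α > −2`, and `f ≥ 0` on the collar
`S = {x ∈ Ω : 0 < v(x) < δ₀}` where `|∇v| = 1` and `|Δv| ≤ M`, for every
`C` with `0 < C < (γ(γ+1)/(b₂·l₂·γ^q))^{1/(q−1)}` the function `W = C·v^{−γ}` satisfies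
`−ΔW + b·h(|∇W|) + a·W − f ≤ 0` on `{0 < v < δ}` for some `δ ∈ (0, δ₀]`. -/
theorem subsolution_barrier_gradient_dominant {N : ℕ} (hN : 1 ≤ N)
    (Ω : Set (EuclideanSpace ℝ (Fin N))) (hΩ : IsOpen Ω)
    (δ₀ : ℝ) (hδ₀ : 0 < δ₀)
    (v : EuclideanSpace ℝ (Fin N) → ℝ) (M : ℝ) (hM : 0 ≤ M)
    (hv : ContDiffOn ℝ 2 v {x ∈ Ω | 0 < v x ∧ v x < δ₀})
    (hgrad : ∀ x ∈ {x ∈ Ω | 0 < v x ∧ v x < δ₀}, ‖gradient v x‖ = 1)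
    (hlap : ∀ x ∈ {x ∈ Ω | 0 < v x ∧ v x < δ₀}, |laplacian v x| ≤ M)
    (q β : ℝ) (hq : 1 < q) (hβ : 0 ≤ β) (hqβ : q < β + 2)
    (γ : ℝ) (hγ : γ = (β - q + 2) / (q - 1))
    (h : ℝ → ℝ) (l₂ : ℝ) (hl₂ : 0 < l₂)
    (hhnn : ∀ s : ℝ, 0 ≤ s → 0 ≤ h s)
    (hh : ∀ s : ℝ, 0 ≤ s → h s ≤ l₂ * s ^ q)
    (a b f : EuclideanSpace ℝ (Fin N) → ℝ) (b₂ : ℝ) (hb₂ : 0 < b₂)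
    (hbv : ∀ x ∈ {x ∈ Ω | 0 < v x ∧ v x < δ₀}, 0 < b x ∧ b x ≤ b₂ * v x ^ β)
    (a₂ α : ℝ) (ha₂ : 0 < a₂) (hα : -2 < α)
    (ha : ∀ x ∈ {x ∈ Ω | 0 < v x ∧ v x < δ₀}, 0 ≤ a x ∧ a x ≤ a₂ * v x ^ α)
    (hf : ∀ x ∈ {x ∈ Ω | 0 < v x ∧ v x < δ₀}, 0 ≤ f x)
    (C : ℝ) (hC₀ : 0 < C) (hC : C < (γ * (γ + 1) / (b₂ * l₂ * γ ^ q)) ^ (1 / (q - 1))) :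
    ∃ δ : ℝ, 0 < δ ∧ δ ≤ δ₀ ∧ ∀ x ∈ Ω, 0 < v x → v x < δ →
      -laplacian (fun y => C * v y ^ (-γ)) x
        + b x * h ‖gradient (fun y => C * v y ^ (-γ)) x‖
        + a x * (C * v x ^ (-γ)) - f x ≤ 0 := by
  have hq' : 0 < q - 1 := sub_pos.mpr hq
  have hγpos : 0 < γ := hγ ▸ div_pos (by linarith) hq'
  have hγq : γ * (q - 1) = β - q + 2 := by rw [hγ, div_mul_cancel₀ _ hq'.ne']
  have hγpow : 0 < γ ^ q := Real.rpow_pos_of_pos hγpos q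
  have hgap := mul_rpow_lt_of_lt_rpow_inv (by positivity) (by positivity) hC₀ hq hC
  obtain ⟨δ, hδ, hsmall⟩ := exists_pos_forall_add_rpow_le (A := γ * M) (B := a₂)
    (p := α + 2) (by linarith) (sub_pos.mpr hgap)
  refine ⟨min δ δ₀, lt_min hδ hδ₀, min_le_right _ _, fun x hxΩ hvx hxδ => ?_⟩
  have hxS : x ∈ {x ∈ Ω | 0 < v x ∧ v x < δ₀} :=
    ⟨hxΩ, hvx, hxδ.trans_le (min_le_right _ _)⟩
  have hdiff : DifferentiableAt ℝ v x :=
    differentiableAt_of_gradient_ne_zero (norm_ne_zero_iff.mp (by simp [hgrad x hxS]))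
  -- the collar is a neighbourhood of each of its points since `v` is continuous there
  have hnhds : {x ∈ Ω | 0 < v x ∧ v x < δ₀} ∈ 𝓝 x :=
    inter_mem (hΩ.mem_nhds hxΩ) (hdiff.continuousAt (Ioo_mem_nhds hvx hxS.2.2))
  have hlapW : laplacian (fun y => C * v y ^ (-γ)) x
      = C * -γ * v x ^ (-γ - 1) * laplacian v x
        + C * -γ * (-γ - 1) * v x ^ (-γ - 1 - 1) * ‖gradient v x‖ ^ 2 :=
    laplacian_comp (φ := fun t => C * t ^ (-γ)) (φ' := fun t => C * -γ * t ^ (-γ - 1))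
      (hv.contDiffAt hnhds)
      ((lt_mem_nhds hvx).mono fun t ht => hasDerivAt_const_mul_rpow C (-γ) ht)
      (hasDerivAt_const_mul_rpow (C * -γ) (-γ - 1) hvx)
  have hgradW : ‖gradient (fun y => C * v y ^ (-γ)) x‖ = C * γ * v x ^ (-γ - 1) := by
    rw [norm_gradient_comp hdiff (hasDerivAt_const_mul_rpow C (-γ) hvx), hgrad x hxS, mul_one,
      mul_neg, neg_mul, abs_neg, abs_of_pos (by positivity)]
  rw [hlapW, hgradW, hgrad x hxS]
  have hsm := hsmall (v x) hvx (hxδ.trans_le (min_le_left _ _))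
  obtain ⟨hb0, hb⟩ := hbv x hxS
  obtain ⟨ha0, ha⟩ := ha x hxS
  have hf := hf x hxS
  have hL := abs_le.mp (hlap x hxS)
  set t := v x
  set P := t ^ (-γ - 1 - 1) with hP
  have hPpos : 0 < P := Real.rpow_pos_of_pos hvx _
  have hone : t ^ (-γ - 1) = P * t := by
    rw [hP, ← Real.rpow_add_one hvx.ne']; congr 1; ring
  have hreact : t ^ α * t ^ (-γ) = P * t ^ (α + 2) := by
    rw [hP, ← Real.rpow_add hvx, ← Real.rpow_add hvx]; congr 1; ring
  have hgradpow : t ^ β * (C * γ * t ^ (-γ - 1)) ^ q = C * C ^ (q - 1) * γ ^ q * P := by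
    have hexp : β + (-γ - 1) * q = -γ - 1 - 1 := by linarith
    have hCq : C ^ q = C * C ^ (q - 1) := by
      rw [mul_comm, ← Real.rpow_add_one hC₀.ne']; congr 1; ring
    rw [Real.mul_rpow (by positivity) (by positivity), Real.mul_rpow hC₀.le hγpos.le,
      ← Real.rpow_mul hvx.le, hP, ← hexp, Real.rpow_add hvx, hCq]
    ring
  have hterm_grad : b x * h (C * γ * t ^ (-γ - 1))
      ≤ b₂ * l₂ * (C * C ^ (q - 1) * γ ^ q * P) := by
    have hs : 0 ≤ C * γ * t ^ (-γ - 1) := by positivity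
    calc b x * h (C * γ * t ^ (-γ - 1))
        ≤ (b₂ * t ^ β) * (l₂ * (C * γ * t ^ (-γ - 1)) ^ q) :=
          mul_le_mul hb (hh _ hs) (hhnn _ hs) (by positivity)
      _ = b₂ * l₂ * (C * C ^ (q - 1) * γ ^ q * P) := by rw [← hgradpow]; ring
  have hterm_react : a x * (C * t ^ (-γ)) ≤ a₂ * C * (P * t ^ (α + 2)) := by
    calc a x * (C * t ^ (-γ)) ≤ (a₂ * t ^ α) * (C * t ^ (-γ)) := by gcongr
      _ = a₂ * C * (P * t ^ (α + 2)) := by rw [← hreact]; ring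
  have hterm_lap : C * γ * (P * t) * laplacian v x ≤ C * γ * (P * t) * M :=
    mul_le_mul_of_nonneg_left hL.2 (by positivity)
  have hfinal := mul_le_mul_of_nonneg_left hsm (mul_pos hC₀ hPpos).le
  rw [hone] at hterm_grad ⊢
  linarith
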